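/- Let Γ = ℤᵈ ⋊_φ ℤᵏ with abelian image φ(ℤᵏ) ⊂ SL(d,ℤ), and let (u,v) ∈ Γ with Id − φ(v) invertible over ℚ. Set L = (Id − φ(v))ℤᵈ and c = |det(Id − φ(v))|, so L has index c in ℤᵈ. Then for every b ∈ ℤᵏ there exists m with 1 ≤ m ≤ c such that (Id − φ(mb))u ∈ L; consequently ((Id − φ(v))⁻¹(Id − φ(mb))u, mb) is an element of the centraliser Z_Γ(u,v). -/

import Mathlib

/-!
Since `φ(b)` is invertible and commutes with `Id − φ(v)`, it induces an injective self-map of the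
finite group `ℤᵈ/L` of order `c`. An injective self-map of a set with `c` elements returns each
point to itself after some number `m` of steps with `1 ≤ m ≤ c`; for the class of `u` this says
`(Id − φ(mb))u ∈ L`. Writing `(Id − φ(mb))u = (Id − φ(v))x` with `x` integral and moving the
negative terms across gives `x + φ(mb)u = u + φ(v)x`, the commutation of `(x, mb)` with `(u, v)`.
-/

open Matrix

theorem exists_iterate_eq_self {α : Type*} [Finite α] {f : α → α} (hf : Function.Injective f)
    (x : α) : ∃ m, 1 ≤ m ∧ m ≤ Nat.card α ∧ f^[m] x = x := by
  let σ : Equiv.Perm α := Equiv.ofBijective f (Finite.injective_iff_bijective.mp hf)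
  have index_eq := MulAction.index_stabilizer (Equiv.Perm α) x
  have index_ne_zero : (MulAction.stabilizer (Equiv.Perm α) x).index ≠ 0 :=
    index_eq ▸ (Set.ncard_pos (Set.toFinite _)).mpr (MulAction.nonempty_orbit x) |>.ne'
  obtain ⟨m, hm_pos, hm_le, hm⟩ := Subgroup.exists_pow_mem_of_index_ne_zero index_ne_zero σ
  refine ⟨m, hm_pos, hm_le.trans (index_eq ▸ Set.ncard_le_card _), ?_⟩
  rw [show f = σ from rfl, Equiv.Perm.iterate_eq_pow]
  exact hm

theorem exists_sub_iterate_mem {A : Type*} [AddGroup A] {L : AddSubgroup A} [L.Normal]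
    [L.FiniteIndex] {f : A →+ A} (hf : L.comap f = L) (a : A) :
    ∃ m, 1 ≤ m ∧ m ≤ L.index ∧ a - f^[m] a ∈ L := by
  let g : A ⧸ L →+ A ⧸ L := QuotientAddGroup.map L L f hf.ge
  have hg : Function.Injective g := by
    refine (injective_iff_map_eq_zero g).mpr fun q ↦ ?_
    induction q using QuotientAddGroup.induction_on with | H b => ?_
    intro hb
    rw [QuotientAddGroup.eq_zero_iff, ← hf]
    exact (QuotientAddGroup.eq_zero_iff (f b)).mp hb
  have mk_iterate : Function.Semiconj (QuotientAddGroup.mk : A → A ⧸ L) f g := fun _ ↦ rfl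
  obtain ⟨m, hm_pos, hm_le, hm⟩ := exists_iterate_eq_self hg (a : A ⧸ L)
  rw [← (mk_iterate.iterate_right m) a] at hm
  exact ⟨m, hm_pos, hm_le, QuotientAddGroup.eq_iff_sub_mem.mp hm.symm⟩

theorem comap_range_eq_range_of_commute {R V : Type*} [Semiring R] [AddCommMonoid V] [Module R V]
    {f g : Module.End R V} (hf : IsUnit f) (hfg : Commute f g) :
    (LinearMap.range g).comap f = LinearMap.range g := by
  obtain ⟨f, rfl⟩ := hf
  ext w
  constructor
  · rintro ⟨z, hz : g z = f.val w⟩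
    refine ⟨f⁻¹.val z, ?_⟩
    calc g (f⁻¹.val z) = f⁻¹.val (g z) := (LinearMap.congr_fun hfg.units_inv_left z).symm
      _ = (f⁻¹.val * f.val) w := by rw [hz, Module.End.mul_apply]
      _ = w := by rw [Units.inv_mul, Module.End.one_apply]
  · rintro ⟨z, rfl⟩
    exact ⟨f.val z, (LinearMap.congr_fun hfg z).symm⟩

theorem index_range_of_injective {V : Type*} [AddCommGroup V] [Module.Free ℤ V] [Module.Finite ℤ V]
    {f : Module.End ℤ V} (hf : Function.Injective f) :
    (LinearMap.range f).toAddSubgroup.index = (LinearMap.det f).natAbs :=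
  (Submodule.natAbs_det_equiv (LinearMap.range f) (LinearEquiv.ofInjective f hf)).symm

section Matrix

variable {n R : Type*} [Fintype n] [DecidableEq n]

theorem index_range_mulVecLin {A : Matrix n n ℤ} (hA : A.det ≠ 0) :
    (LinearMap.range A.mulVecLin).toAddSubgroup.index = A.det.natAbs := by
  rw [index_range_of_injective (f := A.mulVecLin) (mulVec_injective_of_det_ne_zero hA),
    ← toLin'_apply', LinearMap.det_toLin']

theorem exists_one_sub_pow_mulVec_mem_range {A B : Matrix n n ℤ} (hA : A.det ≠ 0) (hB : IsUnit B)
    (hBA : Commute B A) (u : n → ℤ) :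
    ∃ m, 1 ≤ m ∧ m ≤ A.det.natAbs ∧ (1 - B ^ m) *ᵥ u ∈ LinearMap.range A.mulVecLin := by
  have comap_range :
      (LinearMap.range A.mulVecLin).comap B.mulVecLin = LinearMap.range A.mulVecLin :=
    comap_range_eq_range_of_commute (hB.map toLinAlgEquiv') (hBA.map toLinAlgEquiv')
  have index_eq := index_range_mulVecLin hA
  have : (LinearMap.range A.mulVecLin).toAddSubgroup.FiniteIndex :=
    ⟨index_eq ▸ Int.natAbs_ne_zero.mpr hA⟩
  obtain ⟨m, hm_pos, hm_le, hm⟩ := exists_sub_iterate_mem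
    (L := (LinearMap.range A.mulVecLin).toAddSubgroup) (f := B.mulVecLin.toAddMonoidHom)
    (congrArg Submodule.toAddSubgroup comap_range) u
  have iterate_eq : B.mulVecLin^[m] u = (B ^ m) *ᵥ u := by
    rw [← Module.End.pow_apply, ← toLin'_apply', ← toLin'_pow, toLin'_apply]
  refine ⟨m, hm_pos, index_eq ▸ hm_le, ?_⟩
  rw [sub_mulVec, one_mulVec, ← iterate_eq]
  exact hm

theorem one_sub_mulVec_eq_one_sub_mulVec_iff [Ring R] {B C : Matrix n n R} {x u : n → R} :
    (1 - B) *ᵥ x = (1 - C) *ᵥ u ↔ x + C *ᵥ u = u + B *ᵥ x := by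
  simp only [sub_mulVec, one_mulVec, sub_eq_sub_iff_add_eq_add]

theorem comp_eq_inv_mulVec_of_one_sub_mulVec_eq {K : Type*} [CommRing R] [CommRing K] (f : R →+* K)
    {B C : Matrix n n R} {x u : n → R} (hB : IsUnit (f (1 - B).det))
    (h : (1 - B) *ᵥ x = (1 - C) *ᵥ u) :
    f ∘ x = (1 - B.map f)⁻¹ *ᵥ ((1 - C.map f) *ᵥ (f ∘ u)) := by
  have map_one_sub (D : Matrix n n R) : f.mapMatrix (1 - D) = 1 - D.map f := by
    rw [map_sub, map_one, RingHom.mapMatrix_apply]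
  have one_sub_map_mulVec (D : Matrix n n R) (w : n → R) :
      (1 - D.map f) *ᵥ (f ∘ w) = f ∘ ((1 - D) *ᵥ w) := by
    rw [← map_one_sub]
    exact (funext (f.map_mulVec (1 - D) w)).symm
  have isUnit_det : IsUnit (1 - B.map f).det := by
    rwa [← map_one_sub, ← RingHom.map_det]
  rw [one_sub_map_mulVec, ← h, ← one_sub_map_mulVec, mulVec_mulVec, nonsing_inv_mul _ isUnit_det,
    one_mulVec]

end Matrix

theorem stmt17_general {n G : Type*} [Fintype n] [DecidableEq n] [Group G] (φ : G →* Matrix n n ℤ)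
    (u : n → ℤ) {v : G} (hv : (1 - φ v).det ≠ 0) :
    (LinearMap.range (1 - φ v).mulVecLin).toAddSubgroup.index = (1 - φ v).det.natAbs ∧
    ∀ b : G, Commute b v → ∃ m : ℕ, 1 ≤ m ∧ m ≤ (1 - φ v).det.natAbs ∧
      (1 - φ (b ^ m)) *ᵥ u ∈ LinearMap.range (1 - φ v).mulVecLin ∧
      ∃ x : n → ℤ,
        (fun i ↦ (x i : ℚ)) = ((1 : Matrix n n ℚ) - (φ v).map (↑))⁻¹ *ᵥ
          (((1 : Matrix n n ℚ) - (φ (b ^ m)).map (↑)) *ᵥ fun i ↦ (u i : ℚ)) ∧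
        (x + φ (b ^ m) *ᵥ u, b ^ m * v) = (u + φ v *ᵥ x, v * b ^ m) := by
  refine ⟨index_range_mulVecLin hv, fun b hbv ↦ ?_⟩
  have φb_commute : Commute (φ b) (1 - φ v) := (Commute.one_right _).sub_right (hbv.map φ)
  obtain ⟨m, hm_pos, hm_le, x, hx⟩ :=
    exists_one_sub_pow_mulVec_mem_range hv ((Group.isUnit b).map φ) φb_commute u
  rw [← map_pow] at hx
  have det_isUnit : IsUnit (Int.castRingHom ℚ (1 - φ v).det) := (Int.cast_ne_zero.mpr hv).isUnit
  exact ⟨m, hm_pos, hm_le, ⟨x, hx⟩, x, comp_eq_inv_mulVec_of_one_sub_mulVec_eq _ det_isUnit hx,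
    Prod.ext (one_sub_mulVec_eq_one_sub_mulVec_iff.mp hx) (hbv.pow_left m)⟩

/-- In `Γ = ℤᵈ ⋊_φ ℤᵏ` with abelian image `φ(ℤᵏ) ⊂ SL(d,ℤ)` and `Id − φ(v)`
invertible over `ℚ`: letting `L = (Id − φ(v))ℤᵈ`, of index `c = |det(Id − φ(v))|`
in `ℤᵈ`, for every `b ∈ ℤᵏ` there is `1 ≤ m ≤ c` with `(Id − φ(mb))u ∈ L`, and then
`((Id − φ(v))⁻¹(Id − φ(mb))u, mb)` is an (integral) element of the centraliser of
`(u,v)`. -/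
theorem stmt17 (d k : ℕ) (M : (Fin k → ℤ) → Matrix (Fin d) (Fin d) ℤ)
    (hhom : ∀ y y' : Fin k → ℤ, M (y + y') = M y * M y')
    (hone : M 0 = 1)
    (hdet : ∀ y, (M y).det = 1)
    (hcomm : ∀ y y', M y * M y' = M y' * M y)
    (u : Fin d → ℤ) (v : Fin k → ℤ)
    (hinv : ((1 : Matrix (Fin d) (Fin d) ℤ) - M v).det ≠ 0) :
    (LinearMap.range (((1 : Matrix (Fin d) (Fin d) ℤ) - M v).mulVecLin)).toAddSubgroup.index =
      ((1 : Matrix (Fin d) (Fin d) ℤ) - M v).det.natAbs ∧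
    ∀ b : Fin k → ℤ, ∃ m : ℕ,
      1 ≤ m ∧ m ≤ ((1 : Matrix (Fin d) (Fin d) ℤ) - M v).det.natAbs ∧
      ((1 : Matrix (Fin d) (Fin d) ℤ) - M (m • b)).mulVec u ∈
        LinearMap.range (((1 : Matrix (Fin d) (Fin d) ℤ) - M v).mulVecLin) ∧
      ∃ x : Fin d → ℤ,
        (fun i => ((x i : ℚ))) =
          (((1 : Matrix (Fin d) (Fin d) ℚ) - (M v).map ((↑) : ℤ → ℚ))⁻¹).mulVec
            ((((1 : Matrix (Fin d) (Fin d) ℚ) - (M (m • b)).map ((↑) : ℤ → ℚ))).mulVec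
              (fun i => ((u i : ℚ)))) ∧
        ((x + (M (m • b)).mulVec u, (m • b) + v) =
          ((u + (M v).mulVec x, v + (m • b)) : (Fin d → ℤ) × (Fin k → ℤ))) := by
  let φ : Multiplicative (Fin k → ℤ) →* Matrix (Fin d) (Fin d) ℤ :=
    { toFun := M, map_one' := hone, map_mul' := hhom }
  exact (stmt17_general φ u (v := v) hinv).imp_right fun h b ↦ h b (Commute.all _ _)
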